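/- For all real s > 1 and a > 0, 1/(a+1)^s < ζ(s,a) − 1/a^s ≤ (1/(a+1)^s)·(s+a)/(s−1). -/

import Mathlib

theorem step_aux (s x : ℝ) (hs : 1 < s) (hx : 0 < x) :
    1 / (x + 1) ^ s ≤ x ^ (1 - s) / (s - 1) - (x + 1) ^ (1 - s) / (s - 1) := by
  have hy : 0 < x + 1 := by linarith
  have h1 : 0 < s - 1 := by linarith
  have hl : 1 / (x + 1) ≤ Real.log ((x + 1) / x) := by
    have h := Real.one_sub_inv_le_log_of_pos (div_pos hy hx)
    have e : 1 - ((x + 1) / x)⁻¹ = 1 / (x + 1) := by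
      field_simp
      ring
    rwa [e] at h
  have hb : 1 + (s - 1) * (1 / (x + 1)) ≤ ((x + 1) / x) ^ (s - 1) := by
    rw [Real.rpow_def_of_pos (div_pos hy hx)]
    have h := Real.add_one_le_exp (Real.log ((x + 1) / x) * (s - 1))
    nlinarith
  have e1 : x ^ (1 - s) = (x + 1) ^ (1 - s) * ((x + 1) / x) ^ (s - 1) := by
    rw [Real.div_rpow hy.le hx.le, show (1 - s) = -(s - 1) by ring, Real.rpow_neg hx.le,
      Real.rpow_neg hy.le]
    have := Real.rpow_pos_of_pos hy (s - 1)
    have := Real.rpow_pos_of_pos hx (s - 1)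
    field_simp
  have e2 : 1 / (x + 1) ^ s = (x + 1) ^ (1 - s) * (1 / (x + 1)) := by
    rw [Real.rpow_sub hy, Real.rpow_one]
    have := Real.rpow_pos_of_pos hy s
    field_simp
  have hp := Real.rpow_pos_of_pos hy (1 - s)
  rw [← sub_div, le_div_iff₀ h1, e1, e2]
  nlinarith [mul_le_mul_of_nonneg_left hb hp.le]

theorem hurwitzZeta_sub_bounds (s a : ℝ) (hs : 1 < s) (ha : 0 < a) :
    1 / (a + 1) ^ s < (∑' k : ℕ, 1 / ((k : ℝ) + a) ^ s) - 1 / a ^ s ∧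
    (∑' k : ℕ, 1 / ((k : ℝ) + a) ^ s) - 1 / a ^ s ≤
      1 / (a + 1) ^ s * ((s + a) / (s - 1)) := by
  have h1 : 0 < s - 1 := by linarith
  have hy : 0 < a + 1 := by linarith
  have hpos : ∀ k : ℕ, 0 < 1 / (((k + 2 : ℕ) : ℝ) + a) ^ s := fun k => by positivity
  have hpart : ∀ n : ℕ, ∑ k ∈ Finset.range n, 1 / (((k + 2 : ℕ) : ℝ) + a) ^ s ≤
      (a + 1) ^ (1 - s) / (s - 1) - ((n : ℝ) + a + 1) ^ (1 - s) / (s - 1) := by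
    intro n
    induction n with
    | zero => simp
    | succ n ih =>
      rw [Finset.sum_range_succ]
      have h := step_aux s ((n : ℝ) + a + 1) hs (by positivity)
      have e : (((n + 2 : ℕ) : ℝ) + a) = (n : ℝ) + a + 1 + 1 := by push_cast; ring
      have e' : (((n + 1 : ℕ) : ℝ) + a + 1) = (n : ℝ) + a + 1 + 1 := by push_cast; ring
      rw [e, e']
      linarith
  have hpart' : ∀ n : ℕ, ∑ k ∈ Finset.range n, 1 / (((k + 2 : ℕ) : ℝ) + a) ^ s ≤
      (a + 1) ^ (1 - s) / (s - 1) := by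
    intro n
    have h := hpart n
    have : 0 ≤ ((n : ℝ) + a + 1) ^ (1 - s) / (s - 1) := by positivity
    linarith
  have hsum2 := summable_of_sum_range_le (fun k => (hpos k).le) hpart'
  have hle := Real.tsum_le_of_sum_range_le (fun k => (hpos k).le) hpart'
  have hgt := hsum2.tsum_pos (fun k => (hpos k).le) 0 (hpos 0)
  have hsum : Summable (fun k : ℕ => 1 / ((k : ℝ) + a) ^ s) :=
    (summable_nat_add_iff (f := fun k : ℕ => 1 / ((k : ℝ) + a) ^ s) 2).1 hsum2
  have hsplit := hsum.sum_add_tsum_nat_add 2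
  rw [Finset.sum_range_succ, Finset.sum_range_one] at hsplit
  rw [← hsplit]
  have e0 : ((0 : ℕ) : ℝ) + a = a := by simp
  have e1 : ((1 : ℕ) : ℝ) + a = a + 1 := by push_cast; ring
  rw [e0, e1]
  have e3 : 1 / (a + 1) ^ s * ((s + a) / (s - 1)) =
      1 / (a + 1) ^ s + (a + 1) ^ (1 - s) / (s - 1) := by
    rw [Real.rpow_sub hy, Real.rpow_one]
    have := Real.rpow_pos_of_pos hy s
    field_simp
    ring
  rw [e3]
  constructor <;> linarith
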